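/- Let (X_0,d_0),(X_1,d_1),…,(X_q,d_q) be smooth vector fields on a neighborhood of 0 in ℝ^n, each paired with a ν-parameter degree, let W(t,x) be a smooth ℝ^n-valued map on a neighborhood of (0,0) in ℝ^N×ℝ^n with W(0,x) ≡ 0, and set (𝐗,𝐝) = {(X_1,d_1),…,(X_q,d_q)}. (i) If (𝐗,𝐝) strongly controls (X_0,d_0), then (𝐗,𝐝) controls (X_0,d_0). (ii) If (𝐗,𝐝) strongly controls W, then (𝐗,𝐝) controls W. -/

import Mathlib

open MeasureTheory Metric Filter Set
open scoped ENNReal NNReal Topology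

noncomputable section

namespace Zhang

/-- `ℝ^n` with the Euclidean norm. -/
abbrev Euc (n : ℕ) := EuclideanSpace ℝ (Fin n)

/-- Vector fields on `ℝ^n` (as everywhere-defined maps). -/
abbrev VF (n : ℕ) := Euc n → Euc n

/-- `ν`-parameter degrees. -/
abbrev Deg (ν : ℕ) := Fin ν → ℝ

variable {N ν n q : ℕ}

/-- Admissible multi-parameter dilation data `e = {e_1,…,e_N} ⊆ [0,∞)^ν`. -/
def AdmissibleE (e : Fin N → Fin ν → ℝ) : Prop :=
  (∀ i μ, 0 ≤ e i μ) ∧ (∀ i, ∃ μ, e i μ ≠ 0) ∧ (∀ μ, ∃ i, e i μ ≠ 0)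

/-- `δ^d = ∏_μ δ_μ^{d_μ}` (real exponents). -/
def dpow (δ d : Fin ν → ℝ) : ℝ := ∏ μ, δ μ ^ d μ

/-- The multi-parameter dilation `δ t = (δ^{e_1} t_1, …, δ^{e_N} t_N)`. -/
def dilate (e : Fin N → Fin ν → ℝ) (δ : Fin ν → ℝ) (t : Euc N) : Euc N :=
  (EuclideanSpace.equiv (Fin N) ℝ).symm fun i => dpow δ (e i) * t i

/-- `ς^{(δ)}(t) = δ^{e_1+⋯+e_N} ς(δ t)`. -/
def scaled (e : Fin N → Fin ν → ℝ) (ς : Euc N → ℝ) (δ : Fin ν → ℝ) : Euc N → ℝ :=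
  fun t => (∏ i, dpow δ (e i)) * ς (dilate e δ t)

/-- `2^k = (2^{k_1},…,2^{k_ν})`. -/
def twoPow (k : Fin ν → ℕ) : Fin ν → ℝ := fun μ => 2 ^ k μ

/-- The (global) `C^m` supremum norm of a function. -/
def CmSupNorm {E F : Type*} [NormedAddCommGroup E] [NormedSpace ℝ E]
    [NormedAddCommGroup F] [NormedSpace ℝ F] (m : ℕ) (f : E → F) : ℝ :=
  ∑ j ∈ Finset.range (m + 1), ⨆ t, ‖iteratedFDeriv ℝ j f t‖

/-- The `C^m` supremum norm of a function on a set. -/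
def CmSupNormOn {E F : Type*} [NormedAddCommGroup E] [NormedSpace ℝ E]
    [NormedAddCommGroup F] [NormedSpace ℝ F] (m : ℕ) (s : Set E) (f : E → F) : ℝ :=
  ∑ j ∈ Finset.range (m + 1), ⨆ t ∈ s, ‖iteratedFDerivWithin ℝ j f s t‖

/-- The cancellation condition: the integral of `g` in the coordinates `t_i` with
`e_i^μ ≠ 0` vanishes identically as a function of the remaining coordinates. -/
def CancelCond (e : Fin N → Fin ν → ℝ) (μ : Fin ν) (g : Euc N → ℝ) : Prop :=
  ∀ t : Fin N → ℝ,
    haveI : DecidablePred fun i : Fin N => e i μ ≠ 0 := Classical.decPred _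
    (∫ s : {i : Fin N // e i μ ≠ 0} → ℝ,
        g ((EuclideanSpace.equiv (Fin N) ℝ).symm fun i =>
          if h : e i μ ≠ 0 then s ⟨i, h⟩ else t i)) = 0

/-- Kernel data for the class `𝒦(N,e,a,ν)`: a sequence `{ς_k}_{k∈ℕ^ν}` bounded in
`C_c^∞(B^N(a))` satisfying the cancellation conditions. -/
def IsKernelSeq (e : Fin N → Fin ν → ℝ) (a : ℝ) (ς : (Fin ν → ℕ) → Euc N → ℝ) : Prop :=
  (∀ k, ContDiff ℝ (⊤ : ℕ∞) (ς k)) ∧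
  (∀ k, tsupport (ς k) ⊆ ball (0 : Euc N) a) ∧
  (∀ m, ∃ C : ℝ, ∀ k, CmSupNorm m (ς k) ≤ C) ∧
  (∀ k μ, k μ ≠ 0 → CancelCond e μ (ς k))

/-- Membership in the Fréchet space `𝒦̄(N,e,a,ν)` (closed ball support). -/
def MemKbar (e : Fin N → Fin ν → ℝ) (a : ℝ) (ς : (Fin ν → ℕ) → Euc N → ℝ) : Prop :=
  (∀ k, ContDiff ℝ (⊤ : ℕ∞) (ς k)) ∧
  (∀ k, tsupport (ς k) ⊆ closedBall (0 : Euc N) a) ∧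
  (∀ m, ∃ C : ℝ, ∀ k, CmSupNorm m (ς k) ≤ C) ∧
  (∀ k μ, k μ ≠ 0 → CancelCond e μ (ς k))

/-- The seminorm `‖{ς_k}‖_m = sup_k ‖ς_k‖_{C^m}` of `𝒦̄(N,e,a,ν)`. -/
def seqSeminorm (m : ℕ) (ς : (Fin ν → ℕ) → Euc N → ℝ) : ℝ :=
  ⨆ k, CmSupNorm m (ς k)

/-- The multi-indices `k ∈ ℕ^ν` with all coordinates `≤ M`. -/
def trunc (ν M : ℕ) : Finset (Fin ν → ℕ) :=
  Finset.image (fun k : Fin ν → Fin (M + 1) => fun μ => (k μ : ℕ)) Finset.univ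

/-- The partial-sum operators `f ↦ ψ(x) Σ_{|k|≤M} ∫ f(γ_t(x)) ς_k^{(2^k)}(t) dt`. -/
def partialOp (e : Fin N → Fin ν → ℝ) (γ : Euc N → Euc n → Euc n) (ψ : Euc n → ℝ)
    (ς : (Fin ν → ℕ) → Euc N → ℝ) (M : ℕ) (f : Euc n → ℝ) : Euc n → ℝ :=
  fun x => ψ x * ∑ k ∈ trunc ν M, ∫ t : Euc N, f (γ t x) * scaled e (ς k) (twoPow k) t

/-- `T` is bounded on `L^p`: the partial-sum operators are bounded uniformly in `M`. -/
def OpBounded (p : ℝ) (e : Fin N → Fin ν → ℝ) (γ : Euc N → Euc n → Euc n)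
    (ψ : Euc n → ℝ) (ς : (Fin ν → ℕ) → Euc N → ℝ) : Prop :=
  ∃ C : ℝ≥0, ∀ M : ℕ, ∀ f : Euc n → ℝ, ContDiff ℝ (⊤ : ℕ∞) f → HasCompactSupport f →
    eLpNorm (partialOp e γ ψ ς M f) (ENNReal.ofReal p) volume ≤
      C * eLpNorm f (ENNReal.ofReal p) volume

/-- All operators with small `ψ` and small kernels in `𝒦(N,e,a,ν)` are `L^p` bounded. -/
def AllOpsBounded (p : ℝ) (e : Fin N → Fin ν → ℝ) (γ : Euc N → Euc n → Euc n) : Prop :=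
  ∃ ε a : ℝ, 0 < ε ∧ 0 < a ∧
    ∀ ψ : Euc n → ℝ, ContDiff ℝ (⊤ : ℕ∞) ψ → HasCompactSupport ψ →
      tsupport ψ ⊆ ball (0 : Euc n) ε →
      ∀ ς : (Fin ν → ℕ) → Euc N → ℝ, IsKernelSeq e a ς → OpBounded p e γ ψ ς

/-! ### Vector fields, brackets, Carnot–Carathéodory geometry -/

/-- The Lie bracket of two vector fields. -/
def lieBracket (X Y : VF n) : VF n := fun x => fderiv ℝ Y x (X x) - fderiv ℝ X x (Y x)

/-- `ℒ(S)`: the smallest set of (vector field, degree) pairs containing `S` and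
closed under Lie brackets (adding degrees). -/
inductive LieGen (S : Set (VF n × Deg ν)) : VF n × Deg ν → Prop
  | base {P : VF n × Deg ν} : P ∈ S → LieGen S P
  | bracket {X Y : VF n} {d d' : Deg ν} : LieGen S (X, d) → LieGen S (Y, d') →
      LieGen S (lieBracket X Y, d + d')

def lieSpan (S : Set (VF n × Deg ν)) : Set (VF n × Deg ν) := {P | LieGen S P}

def unitCube (ν : ℕ) : Set (Fin ν → ℝ) := {δ | ∀ μ, 0 ≤ δ μ ∧ δ μ ≤ 1}

def vecConst (ν : ℕ) (ξ : ℝ) : Fin ν → ℝ := fun _ => ξ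

/-- `a` is a measurable control with `‖Σ_l |a_l|²‖_{L^∞[0,1]} < 1`. -/
def IsSubunit {ι : Type*} [Fintype ι] (a : ℝ → ι → ℝ) : Prop :=
  (∀ l, Measurable fun s => a s l) ∧
  ∃ c : ℝ, c < 1 ∧ ∀ᵐ s ∂(volume.restrict (Set.Icc (0 : ℝ) 1)), ∑ l, a s l ^ 2 ≤ c

/-- `g` is an absolutely continuous solution of `g' = Σ_l a_l δ^{d_l} X_l(g)`, `g(0)=x`,
in integral form. -/
def SolvesODE {ι : Type*} [Fintype ι] (X : ι → VF n) (d : ι → Deg ν) (δ : Fin ν → ℝ)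
    (a : ℝ → ι → ℝ) (x : Euc n) (g : ℝ → Euc n) : Prop :=
  g 0 = x ∧ ∀ u ∈ Set.Icc (0 : ℝ) 1,
    g u = x + ∫ s in (0 : ℝ)..u, ∑ l, a s l • dpow δ (d l) • X l (g s)

/-- The multi-parameter Carnot–Carathéodory ball `B_{(X,d)}(x,δ)` inside `Ω`. -/
def CCBall {ι : Type*} [Fintype ι] (X : ι → VF n) (d : ι → Deg ν) (Ω : Set (Euc n))
    (x : Euc n) (δ : Fin ν → ℝ) : Set (Euc n) :=
  {y | ∃ (g : ℝ → Euc n) (a : ℝ → ι → ℝ), IsSubunit a ∧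
      (∀ u ∈ Set.Icc (0 : ℝ) 1, g u ∈ Ω) ∧ SolvesODE X d δ a x g ∧ g 1 = y}

/-- `(X,d)` satisfies `𝒞(x,δ,Ω)`. -/
def SatC {ι : Type*} [Fintype ι] (X : ι → VF n) (d : ι → Deg ν) (x : Euc n)
    (δ : Fin ν → ℝ) (Ω : Set (Euc n)) : Prop :=
  ∀ a : ℝ → ι → ℝ, IsSubunit a →
    ∃ g : ℝ → Euc n, (∀ u ∈ Set.Icc (0 : ℝ) 1, g u ∈ Ω) ∧ SolvesODE X d δ a x g

/-- The derivation of a scalar function along a vector field. -/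
def derivAlong (Y : VF n) (f : Euc n → ℝ) : Euc n → ℝ := fun x => fderiv ℝ f x (Y x)

/-- `(δX)^α f`: iterated derivations indexed by the ordered multi-index `α`. -/
def derivList {ι : Type*} (X : ι → VF n) (w : ι → ℝ) (α : List ι) (f : Euc n → ℝ) :
    Euc n → ℝ :=
  α.foldr (fun l g => derivAlong (fun x => w l • X l x) g) f

/-- `(X,d)` controls `(X₀,d₀)` on `U` with parameter `ξ₁` (ambient `Ω`). -/
def ControlsOn {ι : Type*} [Fintype ι] (X : ι → VF n) (d : ι → Deg ν)
    (Ω U : Set (Euc n)) (ξ₁ : ℝ) (X₀ : VF n) (d₀ : Deg ν) : Prop :=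
  (∀ x ∈ U, SatC X d x (vecConst ν ξ₁) Ω) ∧
  ∃ c : Euc n → (Fin ν → ℝ) → ι → Euc n → ℝ,
    (∀ x ∈ U, ∀ δ ∈ unitCube ν, ∀ y ∈ CCBall X d Ω x (fun μ => ξ₁ * δ μ),
      dpow δ d₀ • X₀ y = ∑ l, c x δ l y • dpow δ (d l) • X l y) ∧
    (∀ x ∈ U, ∀ δ ∈ unitCube ν, ∀ l, ∀ α : List ι,
      ContinuousOn (derivList X (fun l' => dpow δ (d l')) α (c x δ l))
        (CCBall X d Ω x (fun μ => ξ₁ * δ μ))) ∧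
    (∀ m : ℕ, ∃ C : ℝ, ∀ x ∈ U, ∀ δ ∈ unitCube ν, ∀ l, ∀ α : List ι, α.length ≤ m →
      ∀ y ∈ CCBall X d Ω x (fun μ => ξ₁ * δ μ),
        |derivList X (fun l' => dpow δ (d l')) α (c x δ l) y| ≤ C)

/-- `(X,d)` controls `(X₀,d₀)` (some `U`, `ξ₁`), ambient `Ω`. -/
def ControlsPair {ι : Type*} [Fintype ι] (X : ι → VF n) (d : ι → Deg ν)
    (Ω : Set (Euc n)) (X₀ : VF n) (d₀ : Deg ν) : Prop :=
  ∃ (U : Set (Euc n)) (ξ₁ : ℝ), IsOpen U ∧ (0 : Euc n) ∈ U ∧ U ⊆ Ω ∧ 0 < ξ₁ ∧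
    ControlsOn X d Ω U ξ₁ X₀ d₀

/-- A finite set of pairs controls a pair (ambient neighborhood existentially quantified). -/
def FinsetControls (F : Finset (VF n × Deg ν)) (P : VF n × Deg ν) : Prop :=
  ∃ Ω : Set (Euc n), IsOpen Ω ∧ (0 : Euc n) ∈ Ω ∧
    ControlsPair (fun l : F => (l : VF n × Deg ν).1) (fun l : F => (l : VF n × Deg ν).2)
      Ω P.1 P.2

/-- A set `S` of pairs controls a set `T`. -/
def SetControls (S T : Set (VF n × Deg ν)) : Prop :=
  ∃ F : Finset (VF n × Deg ν), ↑F ⊆ S ∧ ∀ P ∈ S ∪ T, FinsetControls F P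

/-! ### Degrees, Taylor coefficients, exponential coefficients -/

def degMulti (e : Fin N → Fin ν → ℝ) (α : Fin N → ℕ) : Fin ν → ℝ :=
  fun μ => ∑ i, (α i : ℝ) * e i μ

/-- A degree is pure if it has exactly one nonzero coordinate. -/
def IsPureDeg (dg : Fin ν → ℝ) : Prop := ∃! μ, dg μ ≠ 0

/-- `t^α`. -/
def monomial (α : Fin N → ℕ) (t : Euc N) : ℝ := ∏ i, t i ^ α i

/-- The multi-indices `α` with `|α| < M`. -/
def multiIdxLt (N M : ℕ) : Finset (Fin N → ℕ) :=
  (trunc N M).filter fun α => ∑ i, α i < M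

/-- `X` is the family of Taylor coefficient vector fields of `W` at `t = 0`, on `U`. -/
def IsTaylorFieldOf (W : Euc N → Euc n → Euc n) (U : Set (Euc n))
    (X : (Fin N → ℕ) → VF n) : Prop :=
  X 0 = 0 ∧ (∀ α, ContDiffOn ℝ (⊤ : ℕ∞) (X α) U) ∧
  ∀ M : ℕ, ∃ C ε : ℝ, 0 < ε ∧ ∀ t ∈ ball (0 : Euc N) ε, ∀ x ∈ U,
    ‖W t x - ∑ α ∈ multiIdxLt N M, monomial α t • X α x‖ ≤ C * ‖t‖ ^ M

/-- `W(t,x) = (d/dε)|_{ε=1} γ_{εt}(γ_t⁻¹(x))` on `B^N(ρ) × U`. -/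
def IsWFor (γ : Euc N → Euc n → Euc n) (ρ : ℝ) (U : Set (Euc n))
    (W : Euc N → Euc n → Euc n) : Prop :=
  ∃ γinv : Euc N → Euc n → Euc n,
    (∀ t ∈ ball (0 : Euc N) ρ, ∀ x ∈ U, γ t (γinv t x) = x ∧ γinv t (γ t x) = x) ∧
    ∀ t ∈ ball (0 : Euc N) ρ, ∀ x ∈ U,
      HasDerivAt (fun ε : ℝ => γ (ε • t) (γinv t x)) (W t x) 1

/-- `y` is the time-one flow of the vector field `V` from `x`. -/
def FlowsTo (V : VF n) (x y : Euc n) : Prop :=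
  ∃ φ : ℝ → Euc n, φ 0 = x ∧ φ 1 = y ∧ ∀ s ∈ Set.Icc (0 : ℝ) 1, HasDerivAt φ (V (φ s)) s

/-- `Xh` is the family of exponential coefficient vector fields of `γ`:
`γ_t(x) = e^{Σ_{0<|α|<M} t^α X̂_α} x + O(|t|^M)` for every `M`. -/
def IsExpFieldsFor (γ : Euc N → Euc n → Euc n) (U : Set (Euc n))
    (Xh : (Fin N → ℕ) → VF n) : Prop :=
  Xh 0 = 0 ∧ (∀ α, ContDiffOn ℝ (⊤ : ℕ∞) (Xh α) U) ∧
  ∀ M : ℕ, ∃ C ε : ℝ, 0 < ε ∧ ∀ t ∈ ball (0 : Euc N) ε, ∀ x ∈ U,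
    ∃ y : Euc n, FlowsTo (fun z => ∑ α ∈ multiIdxLt N M, monomial α t • Xh α z) x y ∧
      ‖γ t x - y‖ ≤ C * ‖t‖ ^ M

/-- The pure power set `𝒫` of a family of coefficient fields. -/
def pureSet (e : Fin N → Fin ν → ℝ) (X : (Fin N → ℕ) → VF n) : Set (VF n × Deg ν) :=
  {P | ∃ α : Fin N → ℕ, α ≠ 0 ∧ IsPureDeg (degMulti e α) ∧ P = (X α, degMulti e α)}

/-- The nonpure power set `𝒩` of a family of coefficient fields. -/
def nonpureSet (e : Fin N → Fin ν → ℝ) (X : (Fin N → ℕ) → VF n) : Set (VF n × Deg ν) :=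
  {P | ∃ α : Fin N → ℕ, α ≠ 0 ∧ ¬ IsPureDeg (degMulti e α) ∧ P = (X α, degMulti e α)}

/-! ### Strong control -/

/-- `(X,d)` strongly controls `(X₀,d₀)`. -/
def StrongControlsOn {ι : Type*} [Fintype ι] (X : ι → VF n) (d : ι → Deg ν)
    (X₀ : VF n) (d₀ : Deg ν) : Prop :=
  ∃ (U V : Set (Euc n)) (c : ι → Euc n → ℝ),
    IsOpen U ∧ (0 : Euc n) ∈ U ∧ IsOpen V ∧ closure U ⊆ V ∧
    (∀ l, ContDiffOn ℝ (⊤ : ℕ∞) (c l) V) ∧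
    (∀ l, ¬ (∀ μ, d l μ ≤ d₀ μ) → c l = 0) ∧
    (∀ x ∈ U, X₀ x = ∑ l, c l x • X l x)

/-- A finite set of pairs strongly controls a pair. -/
def FinsetStrongControls (F : Finset (VF n × Deg ν)) (P : VF n × Deg ν) : Prop :=
  StrongControlsOn (fun l : F => (l : VF n × Deg ν).1) (fun l : F => (l : VF n × Deg ν).2)
    P.1 P.2

/-- `(X,d)` strongly controls `W(t,x)`. -/
def StrongControlsW {ι : Type*} [Fintype ι] (X : ι → VF n) (d : ι → Deg ν)
    (e : Fin N → Fin ν → ℝ) (W : Euc N → Euc n → Euc n) : Prop :=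
  ∃ (ρ' : ℝ) (U : Set (Euc n)) (V : Set (Euc N × Euc n)) (A : Finset (Fin N → ℕ))
    (c : ι → (Fin N → ℕ) → Euc N → Euc n → ℝ),
    0 < ρ' ∧ IsOpen U ∧ (0 : Euc n) ∈ U ∧ IsOpen V ∧
    closure (ball (0 : Euc N) ρ' ×ˢ U) ⊆ V ∧
    (∀ l α, ContDiffOn ℝ (⊤ : ℕ∞) (fun p : Euc N × Euc n => c l α p.1 p.2) V) ∧
    (∀ l α, degMulti e α ≠ d l → c l α = 0) ∧
    (∀ t ∈ ball (0 : Euc N) ρ', ∀ x ∈ U,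
      W t x = ∑ l, ∑ α ∈ A, (c l α t x * monomial α t) • X l x)

/-- A finite set of pairs strongly controls `W`. -/
def FinsetStrongControlsW (F : Finset (VF n × Deg ν)) (e : Fin N → Fin ν → ℝ)
    (W : Euc N → Euc n → Euc n) : Prop :=
  StrongControlsW (fun l : F => (l : VF n × Deg ν).1) (fun l : F => (l : VF n × Deg ν).2)
    e W

/-! ### Control of `W` -/

/-- `∂_{t_i}` applied to a function of `(t,u)`. -/
def derivTAlong (i : Fin N) (f : Euc N → Euc n → ℝ) : Euc N → Euc n → ℝ :=
  fun t u => fderiv ℝ (fun s => f s u) t (EuclideanSpace.single i (1 : ℝ))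

/-- Iterated `t`-partials indexed by an ordered multi-index. -/
def derivTList (β : List (Fin N)) (f : Euc N → Euc n → ℝ) : Euc N → Euc n → ℝ :=
  β.foldr derivTAlong f

/-- Iterated `u`-derivations along scaled vector fields. -/
def derivUList {ι : Type*} (X : ι → VF n) (w : ι → ℝ) (β : List ι)
    (f : Euc N → Euc n → ℝ) : Euc N → Euc n → ℝ :=
  fun t => derivList X w β (f t)

/-- `(X,d)` controls `W` on `U` for `t ∈ B^N(ρ')` with parameter `ξ₁` (ambient `Ω`). -/
def ControlsWOn {ι : Type*} [Fintype ι] (X : ι → VF n) (d : ι → Deg ν)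
    (e : Fin N → Fin ν → ℝ) (Ω U : Set (Euc n)) (ρ' ξ₁ : ℝ)
    (W : Euc N → Euc n → Euc n) : Prop :=
  (∀ x ∈ U, SatC X d x (vecConst ν ξ₁) Ω) ∧
  ∃ c : Euc n → (Fin ν → ℝ) → ι → Euc N → Euc n → ℝ,
    (∀ x ∈ U, ∀ δ ∈ unitCube ν, ∀ t ∈ ball (0 : Euc N) ρ',
      ∀ u ∈ CCBall X d Ω x (fun μ => ξ₁ * δ μ),
        W (dilate e δ t) u = ∑ l, c x δ l t u • dpow δ (d l) • X l u) ∧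
    (∀ x ∈ U, ∀ δ ∈ unitCube ν, ∀ l, ∀ β' : List (Fin N), ∀ β : List ι,
      ContinuousOn
        (fun p : Euc N × Euc n =>
          derivTList β' (derivUList X (fun l' => dpow δ (d l')) β (c x δ l)) p.1 p.2)
        (ball (0 : Euc N) ρ' ×ˢ CCBall X d Ω x (fun μ => ξ₁ * δ μ))) ∧
    (∀ m : ℕ, ∃ C : ℝ, ∀ x ∈ U, ∀ δ ∈ unitCube ν, ∀ l, ∀ β' : List (Fin N), ∀ β : List ι,
      β'.length + β.length ≤ m → ∀ t ∈ ball (0 : Euc N) ρ',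
        ∀ u ∈ CCBall X d Ω x (fun μ => ξ₁ * δ μ),
          |derivTList β' (derivUList X (fun l' => dpow δ (d l')) β (c x δ l)) t u| ≤ C)

/-- `(X,d)` controls `W` (some `ρ' ≤ ρ`, `ξ₁`, `U`), ambient `Ω`. -/
def ControlsW {ι : Type*} [Fintype ι] (X : ι → VF n) (d : ι → Deg ν)
    (e : Fin N → Fin ν → ℝ) (Ω : Set (Euc n)) (ρ : ℝ)
    (W : Euc N → Euc n → Euc n) : Prop :=
  ∃ (ρ' ξ₁ : ℝ) (U : Set (Euc n)), 0 < ρ' ∧ ρ' ≤ ρ ∧ 0 < ξ₁ ∧ IsOpen U ∧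
    (0 : Euc n) ∈ U ∧ U ⊆ Ω ∧ ControlsWOn X d e Ω U ρ' ξ₁ W

end Zhang

namespace Zhang

section Derivations

variable {N n : ℕ} {ι P : Type*}

theorem derivAlong_const_smul (w k : ℝ) (Y : VF n) (f : Euc n → ℝ) :
    derivAlong (fun x => w • Y x) (k • f) = (w * k) • derivAlong Y f := by
  funext x
  simp only [derivAlong, fderiv_const_smul_field, Pi.smul_apply, map_smul,
    smul_apply, smul_eq_mul]
  ring

theorem derivTAlong_const_smul (k : ℝ) (i : Fin N) (f : Euc N → Euc n → ℝ) :
    derivTAlong i (k • f) = k • derivTAlong i f := by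
  funext t u
  have h : (fun s => (k • f) s u) = k • fun s => f s u := rfl
  rw [derivTAlong, h, fderiv_const_smul_field]
  rfl

theorem derivList_smul (X : ι → VF n) (w : ι → ℝ) (α : List ι) (k : ℝ) (f : Euc n → ℝ) :
    derivList X w α (k • f) = ((α.map w).prod * k) • derivList X (fun _ => 1) α f := by
  induction α with
  | nil => simp [derivList]
  | cons l α ih =>
    change derivAlong _ (derivList X w α (k • f)) =
      _ • derivAlong _ (derivList X (fun _ => 1) α f)
    rw [ih, derivAlong_const_smul]
    simp only [one_smul, List.map_cons, List.prod_cons, mul_assoc]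

theorem derivTList_smul (β : List (Fin N)) (k : ℝ) (f : Euc N → Euc n → ℝ) :
    derivTList β (k • f) = k • derivTList β f := by
  induction β with
  | nil => rfl
  | cons i β ih =>
    change derivTAlong i (derivTList β (k • f)) = k • derivTAlong i (derivTList β f)
    rw [ih, derivTAlong_const_smul]

theorem derivTList_derivUList_smul (X : ι → VF n) (w : ι → ℝ) (β' : List (Fin N))
    (β : List ι) (f : Euc N → Euc n → ℝ) :
    derivTList β' (derivUList X w β f) =
      (β.map w).prod • derivTList β' (derivUList X (fun _ => 1) β f) := by
  rw [← derivTList_smul]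
  congr 1
  funext t
  have h := derivList_smul X w β 1 (f t)
  rw [one_smul, mul_one] at h
  exact h

theorem abs_prod_map_le_one {w : ι → ℝ} (hw : ∀ l, w l ∈ Icc (0 : ℝ) 1) (β : List ι) :
    |(β.map w).prod| ≤ 1 := by
  induction β with
  | nil => simp
  | cons l β ih =>
    rw [List.map_cons, List.prod_cons, abs_mul, abs_of_nonneg (hw l).1]
    exact mul_le_one₀ (hw l).2 (abs_nonneg _) ih

variable [NormedAddCommGroup P] [NormedSpace ℝ P] {O : Set (P × Euc N × Euc n)}

theorem contDiffOn_derivTAlong (hO : IsOpen O) {F : P → Euc N → Euc n → ℝ}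
    (hF : ContDiffOn ℝ (⊤ : ℕ∞) (fun z : P × Euc N × Euc n => F z.1 z.2.1 z.2.2) O)
    (i : Fin N) :
    ContDiffOn ℝ (⊤ : ℕ∞)
      (fun z : P × Euc N × Euc n => derivTAlong i (F z.1) z.2.1 z.2.2) O := by
  have hD := (hF.fderiv_of_isOpen hO (m := (⊤ : ℕ∞)) (by simp)).clm_apply
    (contDiffOn_const (c := ((0, EuclideanSpace.single i 1, 0) : P × Euc N × Euc n)))
  refine hD.congr fun z hz => ?_
  have hd := ((hF.differentiableOn (by simp)).differentiableAt (hO.mem_nhds hz)).hasFDerivAt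
  have hg : HasFDerivAt (fun s : Euc N => ((z.1, s, z.2.2) : P × Euc N × Euc n))
      ((0 : Euc N →L[ℝ] P).prod ((ContinuousLinearMap.id ℝ _).prod 0)) z.2.1 :=
    (hasFDerivAt_const _ _).prodMk ((hasFDerivAt_id _).prodMk (hasFDerivAt_const _ _))
  have hc : HasFDerivAt (fun s : Euc N => F z.1 s z.2.2) _ z.2.1 :=
    HasFDerivAt.comp (g := fun z : P × Euc N × Euc n => F z.1 z.2.1 z.2.2) z.2.1 hd hg
  rw [derivTAlong, hc.fderiv]
  rfl

theorem contDiffOn_derivAlong (hO : IsOpen O) {Ω : Set (Euc n)} (hOΩ : ∀ z ∈ O, z.2.2 ∈ Ω)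
    {Y : VF n} (hY : ContDiffOn ℝ (⊤ : ℕ∞) Y Ω) {F : P → Euc N → Euc n → ℝ}
    (hF : ContDiffOn ℝ (⊤ : ℕ∞) (fun z : P × Euc N × Euc n => F z.1 z.2.1 z.2.2) O) :
    ContDiffOn ℝ (⊤ : ℕ∞)
      (fun z : P × Euc N × Euc n => derivAlong Y (F z.1 z.2.1) z.2.2) O := by
  have hYO : ContDiffOn ℝ (⊤ : ℕ∞) (fun z : P × Euc N × Euc n => Y z.2.2) O :=
    hY.comp (contDiff_snd.comp contDiff_snd).contDiffOn hOΩ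
  have hD := (hF.fderiv_of_isOpen hO (m := (⊤ : ℕ∞)) (by simp)).clm_apply
    ((contDiffOn_const (c := (0 : P))).prodMk ((contDiffOn_const (c := (0 : Euc N))).prodMk hYO))
  refine hD.congr fun z hz => ?_
  have hd := ((hF.differentiableOn (by simp)).differentiableAt (hO.mem_nhds hz)).hasFDerivAt
  have hg : HasFDerivAt (fun u : Euc n => ((z.1, z.2.1, u) : P × Euc N × Euc n))
      ((0 : Euc n →L[ℝ] P).prod
        ((0 : Euc n →L[ℝ] Euc N).prod (ContinuousLinearMap.id ℝ _))) z.2.2 :=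
    (hasFDerivAt_const _ _).prodMk ((hasFDerivAt_const _ _).prodMk (hasFDerivAt_id _))
  have hc : HasFDerivAt (fun u : Euc n => F z.1 z.2.1 u) _ z.2.2 :=
    HasFDerivAt.comp (g := fun z : P × Euc N × Euc n => F z.1 z.2.1 z.2.2) z.2.2 hd hg
  rw [derivAlong, hc.fderiv]
  rfl

theorem contDiffOn_derivTList_derivUList (hO : IsOpen O) {Ω : Set (Euc n)}
    (hOΩ : ∀ z ∈ O, z.2.2 ∈ Ω) {X : ι → VF n} (hX : ∀ l, ContDiffOn ℝ (⊤ : ℕ∞) (X l) Ω)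
    {F : P → Euc N → Euc n → ℝ}
    (hF : ContDiffOn ℝ (⊤ : ℕ∞) (fun z : P × Euc N × Euc n => F z.1 z.2.1 z.2.2) O)
    (w : ι → ℝ) (β' : List (Fin N)) (β : List ι) :
    ContDiffOn ℝ (⊤ : ℕ∞) (fun z : P × Euc N × Euc n =>
      derivTList β' (derivUList X w β (F z.1)) z.2.1 z.2.2) O := by
  induction β' with
  | nil =>
    induction β with
    | nil => exact hF
    | cons l β ih =>
      exact contDiffOn_derivAlong (F := fun p => derivUList X w β (F p)) hO hOΩ
        ((hX l).const_smul (w l)) ih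
  | cons i β' ih =>
    exact contDiffOn_derivTAlong
      (F := fun p => derivTList β' (derivUList X w β (F p))) hO ih i

/-- Uniform bounds for mixed derivatives of a smooth function depending smoothly on parameters
that range over a compact set. -/
theorem exists_bound_derivTList_derivUList [Finite ι] (hO : IsOpen O) {Ω : Set (Euc n)}
    (hOΩ : ∀ z ∈ O, z.2.2 ∈ Ω) {X : ι → VF n} (hX : ∀ l, ContDiffOn ℝ (⊤ : ℕ∞) (X l) Ω)
    {F : P → Euc N → Euc n → ℝ}
    (hF : ContDiffOn ℝ (⊤ : ℕ∞) (fun z : P × Euc N × Euc n => F z.1 z.2.1 z.2.2) O)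
    {K : Set (P × Euc N × Euc n)} (hK : IsCompact K) (hKO : K ⊆ O) (m : ℕ) :
    ∃ C : ℝ, ∀ w : ι → ℝ, (∀ l, w l ∈ Icc (0 : ℝ) 1) → ∀ (β' : List (Fin N)) (β : List ι),
      β'.length + β.length ≤ m → ∀ z ∈ K,
        |derivTList β' (derivUList X w β (F z.1)) z.2.1 z.2.2| ≤ C := by
  have hb : ∀ b : List (Fin N) × List ι, ∃ C : ℝ, ∀ z ∈ K,
      ‖derivTList b.1 (derivUList X (fun _ => 1) b.2 (F z.1)) z.2.1 z.2.2‖ ≤ C := fun b =>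
    hK.exists_bound_of_continuousOn
      ((contDiffOn_derivTList_derivUList hO hOΩ hX hF _ b.1 b.2).continuousOn.mono hKO)
  choose C hC using hb
  obtain ⟨D, hD⟩ := (((List.finite_length_le (Fin N) m).prod
    (List.finite_length_le ι m)).image C).bddAbove
  refine ⟨D, fun w hw β' β hm z hz => ?_⟩
  rw [derivTList_derivUList_smul, Pi.smul_apply, Pi.smul_apply, smul_eq_mul, abs_mul]
  calc _ ≤ 1 * |derivTList β' (derivUList X (fun _ => 1) β (F z.1)) z.2.1 z.2.2| :=
        mul_le_mul_of_nonneg_right (abs_prod_map_le_one hw β) (abs_nonneg _)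
    _ ≤ C (β', β) := by rw [one_mul]; exact hC (β', β) z hz
    _ ≤ D := hD ⟨(β', β), ⟨(Nat.le_add_right _ _).trans hm,
        (Nat.le_add_left _ _).trans hm⟩, rfl⟩

end Derivations

section Caratheodory

variable {E : Type*} [NormedAddCommGroup E] [NormedSpace ℝ E]

/-- Existence for the integral form of an ordinary differential equation whose right-hand side
is merely measurable in time, with a small Lipschitz constant. -/
theorem exists_integral_solution [CompleteSpace E] {f : ℝ → E → E} {M : ℝ} {K : ℝ≥0} (hK : K < 1)
    (hm : ∀ g : ℝ → E, Continuous g →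
      AEStronglyMeasurable (fun s => f s (g s)) (volume.restrict (Icc (0 : ℝ) 1)))
    (hM : ∀ᵐ s ∂(volume.restrict (Icc (0 : ℝ) 1)), ∀ y, ‖f s y‖ ≤ M)
    (hL : ∀ᵐ s ∂(volume.restrict (Icc (0 : ℝ) 1)), ∀ y z, ‖f s y - f s z‖ ≤ K * ‖y - z‖)
    (x : E) :
    ∃ g : ℝ → E, ∀ u ∈ Icc (0 : ℝ) 1, g u = x + ∫ s in (0 : ℝ)..u, f s (g s) := by
  have h01 : (0 : ℝ) ≤ 1 := zero_le_one
  let ext : C(Icc (0 : ℝ) 1, E) → ℝ → E := fun g => IccExtend h01 g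
  have hext : ∀ g, Continuous (ext g) := fun g => g.continuous.Icc_extend'
  have hint : ∀ g, IntegrableOn (fun s => f s (ext g s)) (Icc (0 : ℝ) 1) := fun g =>
    Integrable.of_bound (hm _ (hext g)) M (hM.mono fun s hs => hs _)
  have hint' : ∀ g, ∀ u ∈ Icc (0 : ℝ) 1,
      IntervalIntegrable (fun s => f s (ext g s)) volume 0 u := fun g u hu =>
    (intervalIntegrable_iff_integrableOn_Icc_of_le hu.1).2
      ((hint g).mono_set (Icc_subset_Icc_right hu.2))
  have hcont : ∀ g, ContinuousOn (fun u => ∫ s in (0 : ℝ)..u, f s (ext g s)) (Icc 0 1) := by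
    intro g
    have := intervalIntegral.continuousOn_primitive_interval (a := 0) (b := 1) (μ := volume)
      (f := fun s => f s (ext g s)) (by rw [uIcc_of_le h01]; exact hint g)
    rwa [uIcc_of_le h01] at this
  let Φ : C(Icc (0 : ℝ) 1, E) → C(Icc (0 : ℝ) 1, E) := fun g =>
    ⟨fun u => x + ∫ s in (0 : ℝ)..u, f s (ext g s),
      continuous_const.add (continuousOn_iff_continuous_domRestrict.1 (hcont g))⟩
  have hΦ : ContractingWith K Φ := by
    refine ⟨hK, LipschitzWith.of_dist_le_mul fun g h => ?_⟩
    refine (ContinuousMap.dist_le (by positivity)).2 fun u => ?_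
    have hu := u.2
    change dist (x + ∫ s in (0 : ℝ)..u, f s (ext g s)) (x + ∫ s in (0 : ℝ)..u, f s (ext h s)) ≤ _
    rw [dist_add_left, dist_eq_norm,
      ← intervalIntegral.integral_sub (hint' g u hu) (hint' h u hu)]
    have hb : ‖∫ s in (0 : ℝ)..u, (f s (ext g s) - f s (ext h s))‖ ≤
        (K * dist g h) * |(u : ℝ) - 0| := by
      refine intervalIntegral.norm_integral_le_of_norm_le_const_ae ?_
      filter_upwards [(ae_restrict_iff' measurableSet_Icc).1 hL] with s hs hsu
      rw [uIoc_of_le hu.1] at hsu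
      refine (hs ⟨hsu.1.le, hsu.2.trans hu.2⟩ _ _).trans ?_
      rw [← dist_eq_norm]
      gcongr
      exact ContinuousMap.dist_apply_le_dist _
    refine hb.trans (mul_le_of_le_one_right (by positivity) ?_)
    rw [sub_zero, abs_of_nonneg hu.1]
    exact hu.2
  obtain ⟨g, hg⟩ : ∃ g, Φ g = g := ⟨_, hΦ.fixedPoint_isFixedPt⟩
  refine ⟨ext g, fun u hu => ?_⟩
  have := congrArg (fun φ : C(Icc (0 : ℝ) 1, E) => φ ⟨u, hu⟩) hg
  change IccExtend h01 g u = _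
  rw [IccExtend_of_mem h01 _ hu]
  exact this.symm

/-- A solution of an integral equation stays in the ball where the right-hand side is small.
No integrability is assumed: where it fails the integral vanishes. -/
theorem norm_sub_le_of_integral_solution {f : ℝ → E} {g : ℝ → E} {x : E} {r M : ℝ} (hr : 0 < r)
    (hMr : M < r)
    (hg : ∀ u ∈ Icc (0 : ℝ) 1, g u = x + ∫ s in (0 : ℝ)..u, f s)
    (hf : ∀ᵐ s, s ∈ Icc (0 : ℝ) 1 → ‖g s - x‖ ≤ r → ‖f s‖ ≤ M) :
    ∀ u ∈ Icc (0 : ℝ) 1, ‖g u - x‖ ≤ r := by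
  intro u hu
  by_contra! hlt
  have hint : IntegrableOn f (Icc 0 u) := by
    by_contra hni
    rw [← intervalIntegrable_iff_integrableOn_Icc_of_le hu.1] at hni
    rw [hg u hu, intervalIntegral.integral_undef hni, add_zero, sub_self, norm_zero] at hlt
    exact hlt.not_ge hr.le
  have hcont : ContinuousOn g (Icc 0 u) := by
    have h := intervalIntegral.continuousOn_primitive_interval (a := 0) (b := u) (μ := volume)
      (f := f) (by rwa [uIcc_of_le hu.1])
    rw [uIcc_of_le hu.1] at h
    exact (continuousOn_const.add h).congr fun v hv => hg v ⟨hv.1, hv.2.trans hu.2⟩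
  have hcl : IsCompact (Icc 0 u ∩ (fun v => ‖g v - x‖) ⁻¹' Ici r) :=
    isCompact_Icc.of_isClosed_subset
      ((hcont.sub continuousOn_const).norm.preimage_isClosed_of_isClosed isClosed_Icc
        isClosed_Ici) inter_subset_left
  obtain ⟨v, ⟨hv, hvr⟩, hmin⟩ := hcl.exists_isLeast ⟨u, ⟨hu.1, le_rfl⟩, hlt.le⟩
  have hb : ‖∫ s in (0 : ℝ)..v, f s‖ ≤ max M 0 * |v - 0| := by
    refine intervalIntegral.norm_integral_le_of_norm_le_const_ae ?_
    filter_upwards [hf, compl_mem_ae_iff.2 (measure_singleton v)] with s hs hsv hs0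
    rw [uIoc_of_le hv.1] at hs0
    have hlt' : s < v := lt_of_le_of_ne hs0.2 hsv
    refine (hs ⟨hs0.1.le, hs0.2.trans (hv.2.trans hu.2)⟩ ?_).trans (le_max_left _ _)
    by_contra! hc
    exact hlt'.not_ge (hmin ⟨⟨hs0.1.le, hlt'.le.trans hv.2⟩, hc.le⟩)
  have hv1 : |v - 0| ≤ 1 := by
    rw [sub_zero, abs_of_nonneg hv.1]
    exact hv.2.trans hu.2
  have hvr' : r ≤ ‖g v - x‖ := hvr
  rw [hg v ⟨hv.1, hv.2.trans hu.2⟩, add_sub_cancel_left] at hvr'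
  have := hvr'.trans (hb.trans (mul_le_of_le_one_right (le_max_right _ _) hv1))
  exact this.not_gt (max_lt hMr hr)

end Caratheodory

section Dilations

variable {N ν : ℕ} {δ : Fin ν → ℝ}

theorem dpow_mem_Icc (hδ : δ ∈ unitCube ν) {d : Deg ν} (hd : ∀ μ, 0 ≤ d μ) :
    dpow δ d ∈ Icc (0 : ℝ) 1 :=
  ⟨Finset.prod_nonneg fun μ _ => Real.rpow_nonneg (hδ μ).1 _,
    Finset.prod_le_one (fun μ _ => Real.rpow_nonneg (hδ μ).1 _)
      fun μ _ => Real.rpow_le_one (hδ μ).1 (hδ μ).2 (hd μ)⟩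

theorem dpow_nonneg (hδ : ∀ μ, 0 ≤ δ μ) (d : Deg ν) : 0 ≤ dpow δ d :=
  Finset.prod_nonneg fun μ _ => Real.rpow_nonneg (hδ μ) _

theorem dpow_sub_mul_dpow (hδ : ∀ μ, 0 ≤ δ μ) {d d₀ : Deg ν} (hd : ∀ μ, 0 ≤ d μ)
    (hle : ∀ μ, d μ ≤ d₀ μ) : dpow δ (d₀ - d) * dpow δ d = dpow δ d₀ := by
  rw [dpow, dpow, dpow, ← Finset.prod_mul_distrib]
  refine Finset.prod_congr rfl fun μ _ => ?_
  rw [Pi.sub_apply, ← Real.rpow_add_of_nonneg (hδ μ) (sub_nonneg.2 (hle μ)) (hd μ),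
    sub_add_cancel]

theorem dpow_degMulti (hδ : ∀ μ, 0 ≤ δ μ) {e : Fin N → Fin ν → ℝ} (he : ∀ i μ, 0 ≤ e i μ)
    (α : Fin N → ℕ) : dpow δ (degMulti e α) = ∏ i, dpow δ (e i) ^ α i := by
  simp only [dpow, degMulti, ← Finset.prod_pow]
  rw [Finset.prod_comm]
  refine Finset.prod_congr rfl fun μ _ => ?_
  rw [Real.rpow_sum_of_nonneg (hδ μ) fun i _ => mul_nonneg (Nat.cast_nonneg _) (he i μ)]
  refine Finset.prod_congr rfl fun i _ => ?_
  rw [mul_comm, Real.rpow_mul (hδ μ), Real.rpow_natCast]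

theorem monomial_dilate (hδ : ∀ μ, 0 ≤ δ μ) {e : Fin N → Fin ν → ℝ} (he : ∀ i μ, 0 ≤ e i μ)
    (α : Fin N → ℕ) (t : Euc N) :
    monomial α (dilate e δ t) = dpow δ (degMulti e α) * monomial α t := by
  rw [dpow_degMulti hδ he, monomial, monomial, ← Finset.prod_mul_distrib]
  exact Finset.prod_congr rfl fun i _ => mul_pow _ _ _

theorem dpow_const_mul_le (hδ : δ ∈ unitCube ν) {d : Deg ν} (hd : ∀ μ, 0 ≤ d μ) {ξ : ℝ}
    (hξ : 0 ≤ ξ) : dpow (fun μ => ξ * δ μ) d ≤ dpow (vecConst ν ξ) d :=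
  Finset.prod_le_prod (fun μ _ => Real.rpow_nonneg (mul_nonneg hξ (hδ μ).1) _) fun μ _ =>
    Real.rpow_le_rpow (mul_nonneg hξ (hδ μ).1) (mul_le_of_le_one_right hξ (hδ μ).2) (hd μ)

theorem exists_pos_dpow_vecConst_le {ι : Type*} [Finite ι] {d : ι → Deg ν}
    (hd : ∀ l, (∀ μ, 0 ≤ d l μ) ∧ d l ≠ 0) {η : ℝ} (hη : 0 < η) :
    ∃ ξ : ℝ, 0 < ξ ∧ ∀ l, dpow (vecConst ν ξ) (d l) ≤ η := by
  have hev : ∀ᶠ ξ : ℝ in 𝓝[>] 0, ∀ l, dpow (vecConst ν ξ) (d l) < η := by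
    refine eventually_all.2 fun l => ?_
    have hc : Continuous fun ξ : ℝ => dpow (vecConst ν ξ) (d l) :=
      continuous_finsetProd _ fun μ _ => Real.continuous_rpow_const ((hd l).1 μ)
    obtain ⟨μ, hμ⟩ := Function.ne_iff.1 (hd l).2
    have h0 : dpow (vecConst ν 0) (d l) = 0 :=
      Finset.prod_eq_zero (Finset.mem_univ μ) (Real.zero_rpow hμ)
    exact nhdsWithin_le_nhds (hc.tendsto 0 |>.eventually_lt_const (by rwa [h0]))
  obtain ⟨ξ, hξ, hpos⟩ := (hev.and self_mem_nhdsWithin).exists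
  exact ⟨ξ, hpos, fun l => (hξ l).le⟩

theorem norm_symm_mul_le {s : Fin N → ℝ} (hs : s ∈ Icc (0 : Fin N → ℝ) 1) (t : Euc N) :
    ‖(EuclideanSpace.equiv (Fin N) ℝ).symm fun i => s i * t i‖ ≤ ‖t‖ := by
  rw [EuclideanSpace.norm_eq, EuclideanSpace.norm_eq]
  refine Real.sqrt_le_sqrt (Finset.sum_le_sum fun i _ => ?_)
  have h : ‖s i * t i‖ ≤ ‖t i‖ := by
    rw [norm_mul, Real.norm_of_nonneg (hs.1 i)]
    exact mul_le_of_le_one_left (norm_nonneg _) (hs.2 i)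
  exact pow_le_pow_left₀ (norm_nonneg _) h 2

end Dilations

section CarnotCaratheodory

variable {ν n : ℕ} {ι : Type*} [Fintype ι]

theorem IsSubunit.ae_abs_le_one {a : ℝ → ι → ℝ} (ha : IsSubunit a) :
    ∀ᵐ s ∂(volume.restrict (Icc (0 : ℝ) 1)), ∀ l, |a s l| ≤ 1 := by
  obtain ⟨-, c, hc, h⟩ := ha
  filter_upwards [h] with s hs l
  rw [← sq_le_one_iff_abs_le_one]
  exact (Finset.single_le_sum (f := fun l => a s l ^ 2) (fun i _ => sq_nonneg _)
    (Finset.mem_univ l)).trans (hs.trans hc.le)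

theorem norm_sum_control_le {η M : ℝ} (hη : 0 ≤ η) {b w : ι → ℝ} (hb : ∀ l, |b l| ≤ 1)
    (hw : ∀ l, w l ∈ Icc 0 η) {v : ι → Euc n} (hv : ∀ l, ‖v l‖ ≤ M) :
    ‖∑ l, b l • w l • v l‖ ≤ Fintype.card ι * η * M := by
  refine (norm_sum_le_of_le _ (f := fun l => b l • w l • v l) (n := fun _ => η * M)
    fun l _ => ?_).trans_eq ?_
  · rw [norm_smul, norm_smul, Real.norm_eq_abs, Real.norm_of_nonneg (hw l).1]
    calc |b l| * (w l * ‖v l‖) ≤ 1 * (η * M) := by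
          gcongr
          · exact mul_nonneg (hw l).1 (norm_nonneg _)
          · exact hb l
          · exact (hw l).2
          · exact hv l
      _ = η * M := one_mul _
  · rw [Finset.sum_const, Finset.card_univ, nsmul_eq_mul, mul_assoc]

/-- Near `0`, smooth vector fields agree with globally bounded and Lipschitz ones. -/
theorem exists_bounded_lipschitz_extension {Ω : Set (Euc n)} {X : ι → VF n}
    (hX : ∀ l, ContDiffOn ℝ (⊤ : ℕ∞) (X l) Ω) (hΩ : IsOpen Ω) {r : ℝ} (hr : 0 < r)
    (hrΩ : closedBall 0 (3 * r) ⊆ Ω) :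
    ∃ (Y : ι → VF n) (M : ℝ) (K : ℝ≥0), 0 ≤ M ∧
      (∀ l, ∀ x ∈ closedBall (0 : Euc n) (2 * r), Y l x = X l x) ∧
      (∀ l x, ‖Y l x‖ ≤ M) ∧ ∀ l, LipschitzWith K (Y l) := by
  let χ : ContDiffBump (0 : Euc n) := ⟨2 * r, 3 * r, by linarith, by linarith⟩
  have hcd : ∀ l, ContDiff ℝ (⊤ : ℕ∞) fun x => χ x • X l x := fun l => by
    refine contDiff_iff_contDiffAt.2 fun x => ?_
    by_cases hx : x ∈ tsupport χ
    · have hxΩ : x ∈ Ω := hrΩ (χ.tsupport_eq ▸ hx)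
      exact χ.contDiff.contDiffAt.smul ((hX l).contDiffAt (hΩ.mem_nhds hxΩ))
    · refine contDiffAt_const (c := 0) |>.congr_of_eventuallyEq ?_
      filter_upwards [notMem_tsupport_iff_eventuallyEq.1 hx] with y hy
      simp [hy]
  have hcs : ∀ l, HasCompactSupport fun x => χ x • X l x := fun l =>
    χ.hasCompactSupport.smul_right
  choose M hM using fun l => (hcs l).exists_bound_of_continuous (hcd l).continuous
  choose K hK using fun l => (hcd l).lipschitzWith_of_hasCompactSupport (hcs l) (by simp)
  refine ⟨fun l x => χ x • X l x, ∑ l, |M l|, ∑ l, K l,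
    Finset.sum_nonneg fun _ _ => abs_nonneg _, fun l x hx => ?_, fun l x => ?_, fun l => ?_⟩
  · simp only [χ.one_of_mem_closedBall hx, one_smul]
  · exact (hM l x).trans ((le_abs_self _).trans (Finset.single_le_sum (f := fun l => |M l|)
      (fun _ _ => abs_nonneg _) (Finset.mem_univ l)))
  · exact (hK l).weaken (Finset.single_le_sum (f := K) (fun _ _ => zero_le)
      (Finset.mem_univ l))

theorem exists_satC_and_CCBall_subset {Ω : Set (Euc n)} (hΩ : IsOpen Ω) {X : ι → VF n}
    (hX : ∀ l, ContDiffOn ℝ (⊤ : ℕ∞) (X l) Ω) {d : ι → Deg ν}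
    (hd : ∀ l, (∀ μ, 0 ≤ d l μ) ∧ d l ≠ 0) {r : ℝ} (hr : 0 < r)
    (hrΩ : closedBall 0 (3 * r) ⊆ Ω) :
    ∃ ξ : ℝ, 0 < ξ ∧ ∀ x ∈ ball (0 : Euc n) r, SatC X d x (vecConst ν ξ) Ω ∧
      ∀ δ ∈ unitCube ν, CCBall X d Ω x (fun μ => ξ * δ μ) ⊆ closedBall 0 (2 * r) := by
  obtain ⟨Y, M, K, hM0, hYX, hM, hK⟩ := exists_bounded_lipschitz_extension hX hΩ hr hrΩ
  set q : ℝ := (Fintype.card ι : ℝ)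
  have hq0 : 0 ≤ q := Nat.cast_nonneg _
  obtain ⟨η, hη, hηM, hηK⟩ : ∃ η : ℝ, 0 < η ∧ q * η * M < r ∧ q * η * K < 1 := by
    have hev : ∀ᶠ η : ℝ in 𝓝[>] 0, q * η * M < r ∧ q * η * K < 1 := by
      refine nhdsWithin_le_nhds (Eventually.and ?_ ?_) <;>
      refine Tendsto.eventually_lt_const (v := 0) (by positivity) ?_ <;>
      exact Continuous.tendsto' (by fun_prop) _ _ (by simp)
    obtain ⟨η, h, hpos⟩ := (hev.and self_mem_nhdsWithin).exists
    exact ⟨η, hpos, h.1, h.2⟩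
  obtain ⟨ξ, hξ, hξη⟩ := exists_pos_dpow_vecConst_le hd hη
  have hball : ∀ {x y : Euc n}, x ∈ ball 0 r → ‖y - x‖ ≤ r → y ∈ closedBall 0 (2 * r) := by
    intro x y hx hy
    rw [mem_ball_zero_iff] at hx
    rw [mem_closedBall_zero_iff]
    have := norm_add_le (y - x) x
    rw [sub_add_cancel] at this
    linarith
  refine ⟨ξ, hξ, fun x hx => ⟨fun a ha => ?_, fun δ hδ y => ?_⟩⟩
  · set w : ι → ℝ := fun l => dpow (vecConst ν ξ) (d l) with hw
    have hwη : ∀ l, w l ∈ Icc 0 η := fun l => ⟨dpow_nonneg (fun _ => hξ.le) _, hξη l⟩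
    have hbound : ∀ᵐ s ∂(volume.restrict (Icc (0 : ℝ) 1)), ∀ y,
        ‖∑ l, a s l • w l • Y l y‖ ≤ q * η * M := by
      filter_upwards [ha.ae_abs_le_one] with s hs y
      exact norm_sum_control_le hη.le hs hwη fun l => hM l y
    have hqK : 0 ≤ q * η * K := by positivity
    obtain ⟨g, hg⟩ := exists_integral_solution (f := fun s y => ∑ l, a s l • w l • Y l y)
      (M := q * η * M) (K := ⟨q * η * K, hqK⟩) hηK
      (fun g hg => by
        refine Measurable.aestronglyMeasurable (Finset.measurable_sum _ fun l _ => ?_)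
        exact (ha.1 l).smul (((hK l).continuous.comp hg).measurable.const_smul (w l)))
      hbound
      (by
        filter_upwards [ha.ae_abs_le_one] with s hs y z
        simp only [← Finset.sum_sub_distrib, ← smul_sub]
        refine (norm_sum_control_le (M := K * ‖y - z‖) hη.le hs hwη fun l => ?_).trans_eq ?_
        · exact (hK l).norm_sub_le y z
        · exact (mul_assoc _ _ _).symm) x
    have hgr := norm_sub_le_of_integral_solution hr hηM hg
      (by
        filter_upwards [(ae_restrict_iff' measurableSet_Icc).1 hbound] with s hs h1 _
        exact hs h1 _)
    refine ⟨g, fun u hu => hrΩ (closedBall_subset_closedBall (by linarith)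
      (hball hx (hgr u hu))), ?_, fun u hu => ?_⟩
    · simpa using hg 0 ⟨le_rfl, zero_le_one⟩
    · rw [hg u hu]
      congr 1
      refine intervalIntegral.integral_congr fun s hs => ?_
      rw [uIcc_of_le hu.1] at hs
      exact Finset.sum_congr rfl fun l _ => by
        rw [hYX l _ (hball hx (hgr s ⟨hs.1, hs.2.trans hu.2⟩))]
  · rintro ⟨g, a, ha, -, ⟨-, hg⟩, rfl⟩
    have hwη : ∀ l, dpow (fun μ => ξ * δ μ) (d l) ∈ Icc 0 η := fun l =>
      ⟨dpow_nonneg (fun μ => mul_nonneg hξ.le (hδ μ).1) _,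
        (dpow_const_mul_le hδ (hd l).1 hξ.le).trans (hξη l)⟩
    refine hball hx (norm_sub_le_of_integral_solution hr hηM hg ?_ 1 ⟨zero_le_one, le_rfl⟩)
    filter_upwards [(ae_restrict_iff' measurableSet_Icc).1 ha.ae_abs_le_one] with s hs h1 h2
    refine norm_sum_control_le hη.le (hs h1) hwη fun l => ?_
    rw [← hYX l _ (hball hx h2)]
    exact hM l _

end CarnotCaratheodory

section Control

variable {N ν n : ℕ} {ι : Type*} [Fintype ι] {Ω : Set (Euc n)} {X : ι → VF n} {d : ι → Deg ν}

theorem StrongControlsOn.controlsPair {X₀ : VF n} {d₀ : Deg ν} (hΩ : IsOpen Ω)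
    (h0 : (0 : Euc n) ∈ Ω) (hX : ∀ l, ContDiffOn ℝ (⊤ : ℕ∞) (X l) Ω)
    (hd : ∀ l, (∀ μ, 0 ≤ d l μ) ∧ d l ≠ 0) (h : StrongControlsOn X d X₀ d₀) :
    ControlsPair X d Ω X₀ d₀ := by
  obtain ⟨U, V, c, hU, hU0, hV, hUV, hc, hc0, hX₀⟩ := h
  obtain ⟨R, hR, hRU⟩ := nhds_basis_closedBall.mem_iff.1
    (inter_mem (hU.mem_nhds hU0) (hΩ.mem_nhds h0))
  obtain ⟨r, hr, rfl⟩ : ∃ r, 0 < r ∧ R = 3 * r := ⟨R / 3, by positivity, by ring⟩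
  obtain ⟨ξ, hξ, hξB⟩ := exists_satC_and_CCBall_subset hΩ hX hd hr (hRU.trans inter_subset_right)
  have hsub : closedBall (0 : Euc n) (2 * r) ⊆ U ∩ Ω :=
    (closedBall_subset_closedBall (by linarith)).trans hRU
  let F : ι → ℝ → Euc 0 → Euc n → ℝ := fun l p _ => p • c l
  let k : (Fin ν → ℝ) → ι → ℝ := fun δ l => dpow δ fun μ => max (d₀ μ - d l μ) 0
  let O : Set (ℝ × Euc 0 × Euc n) := {z | z.2.2 ∈ V ∩ Ω}
  let K : Set (ℝ × Euc 0 × Euc n) := Icc 0 1 ×ˢ ({0} ×ˢ closedBall 0 (2 * r))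
  have hO : IsOpen O := (hV.inter hΩ).preimage (continuous_snd.comp continuous_snd)
  have hOΩ : ∀ z ∈ O, z.2.2 ∈ Ω := fun z hz => hz.2
  have hK : IsCompact K :=
    isCompact_Icc.prod (isCompact_singleton.prod (isCompact_closedBall _ _))
  have hKO : K ⊆ O := fun z hz =>
    ⟨hUV (subset_closure (hsub hz.2.2).1), (hsub hz.2.2).2⟩
  have hF : ∀ l, ContDiffOn ℝ (⊤ : ℕ∞)
      (fun z : ℝ × Euc 0 × Euc n => F l z.1 z.2.1 z.2.2) O := fun l =>
    contDiff_fst.contDiffOn.smul ((hc l).comp (contDiff_snd.comp contDiff_snd).contDiffOn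
      fun z hz => hz.1)
  have hmem : ∀ δ ∈ unitCube ν, ∀ l, ∀ u ∈ closedBall (0 : Euc n) (2 * r),
      ((k δ l, 0, u) : ℝ × Euc 0 × Euc n) ∈ K := fun δ hδ l u hu =>
    ⟨dpow_mem_Icc hδ fun μ => le_max_right _ _, rfl, hu⟩
  refine ⟨ball 0 r, ξ, isOpen_ball, mem_ball_self hr, fun x hx => (hsub
    (ball_subset_closedBall (ball_subset_ball (by linarith) hx))).2, hξ,
    fun x hx => (hξB x hx).1, fun _ δ l => k δ l • c l, ?_, ?_, ?_⟩
  · intro x hx δ hδ y hy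
    rw [hX₀ y (hsub ((hξB x hx).2 δ hδ hy)).1, Finset.smul_sum]
    refine Finset.sum_congr rfl fun l _ => ?_
    by_cases hle : ∀ μ, d l μ ≤ d₀ μ
    · have hk : k δ l = dpow δ (d₀ - d l) :=
        congrArg (dpow δ) (funext fun μ => max_eq_left (sub_nonneg.2 (hle μ)))
      rw [← dpow_sub_mul_dpow (fun μ => (hδ μ).1) (hd l).1 hle, ← hk]
      change (k δ l * _) • c l y • X l y = (k δ l * c l y) • _ • X l y
      rw [smul_smul, smul_smul]
      congr 1
      ring
    · simp [hc0 l hle]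
  · intro x hx δ hδ l α
    exact (contDiffOn_derivTList_derivUList hO hOΩ hX (hF l) (fun l' => dpow δ (d l')) [] α
      ).continuousOn.comp (f := fun u => ((k δ l, 0, u) : ℝ × Euc 0 × Euc n)) (by fun_prop)
      fun u hu => hKO (hmem δ hδ l u ((hξB x hx).2 δ hδ hu))
  · intro m
    choose C hC using fun l => exists_bound_derivTList_derivUList hO hOΩ hX (hF l) hK hKO m
    refine ⟨∑ l, |C l|, fun x hx δ hδ l α hα y hy => ?_⟩
    refine (hC l (fun l' => dpow δ (d l')) (fun l' => dpow_mem_Icc hδ (hd l').1) [] α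
      (by simpa using hα) _ (hmem δ hδ l y ((hξB x hx).2 δ hδ hy))).trans ?_
    exact (le_abs_self _).trans (Finset.single_le_sum (f := fun l => |C l|)
      (fun _ _ => abs_nonneg _) (Finset.mem_univ l))

theorem StrongControlsW.controlsW {e : Fin N → Fin ν → ℝ} (he : ∀ i μ, 0 ≤ e i μ)
    {W : Euc N → Euc n → Euc n} {ρ : ℝ} (hρ : 0 < ρ) (hΩ : IsOpen Ω)
    (h0 : (0 : Euc n) ∈ Ω) (hX : ∀ l, ContDiffOn ℝ (⊤ : ℕ∞) (X l) Ω)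
    (hd : ∀ l, (∀ μ, 0 ≤ d l μ) ∧ d l ≠ 0) (h : StrongControlsW X d e W) :
    ControlsW X d e Ω ρ W := by
  obtain ⟨ρ', U, V, A, c, hρ', hU, hU0, hV, hUV, hc, hc0, hW⟩ := h
  obtain ⟨R, hR, hRU⟩ := nhds_basis_closedBall.mem_iff.1
    (inter_mem (hU.mem_nhds hU0) (hΩ.mem_nhds h0))
  obtain ⟨r, hr, rfl⟩ : ∃ r, 0 < r ∧ R = 3 * r := ⟨R / 3, by positivity, by ring⟩
  obtain ⟨ξ, hξ, hξB⟩ := exists_satC_and_CCBall_subset hΩ hX hd hr (hRU.trans inter_subset_right)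
  have hsub : closedBall (0 : Euc n) (2 * r) ⊆ U ∩ Ω :=
    (closedBall_subset_closedBall (by linarith)).trans hRU
  obtain ⟨σ, hσ, hσρ, hσρ'⟩ : ∃ σ, 0 < σ ∧ σ ≤ ρ ∧ σ < ρ' :=
    ⟨min ρ (ρ' / 2), by positivity, min_le_left _ _, (min_le_right _ _).trans_lt (by linarith)⟩
  let D : (Fin N → ℝ) → Euc N → Euc N := fun s t =>
    (EuclideanSpace.equiv (Fin N) ℝ).symm fun i => s i * t i
  let F : ι → (Fin N → ℝ) → Euc N → Euc n → ℝ := fun l s t u =>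
    ∑ α ∈ A, c l α (D s t) u * monomial α t
  let k : (Fin ν → ℝ) → Fin N → ℝ := fun δ i => dpow δ (e i)
  have hD : ContDiff ℝ (⊤ : ℕ∞)
      (fun z : (Fin N → ℝ) × Euc N × Euc n => (D z.1 z.2.1, z.2.2)) := by
    refine ContDiff.prodMk ((EuclideanSpace.equiv (Fin N) ℝ).symm.contDiff.comp
      (contDiff_pi.2 fun i => ?_)) (by fun_prop)
    fun_prop
  let O : Set ((Fin N → ℝ) × Euc N × Euc n) := {z | (D z.1 z.2.1, z.2.2) ∈ V ∧ z.2.2 ∈ Ω}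
  let K : Set ((Fin N → ℝ) × Euc N × Euc n) :=
    Icc 0 1 ×ˢ (closedBall 0 σ ×ˢ closedBall 0 (2 * r))
  have hO : IsOpen O := (hV.preimage hD.continuous).inter
    (hΩ.preimage (continuous_snd.comp continuous_snd))
  have hOΩ : ∀ z ∈ O, z.2.2 ∈ Ω := fun z hz => hz.2
  have hK : IsCompact K :=
    isCompact_Icc.prod ((isCompact_closedBall _ _).prod (isCompact_closedBall _ _))
  have hDball : ∀ s ∈ Icc (0 : Fin N → ℝ) 1, ∀ t ∈ closedBall (0 : Euc N) σ,
      D s t ∈ ball (0 : Euc N) ρ' := fun s hs t ht => by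
    rw [mem_closedBall_zero_iff] at ht
    rw [mem_ball_zero_iff]
    exact (norm_symm_mul_le hs t).trans_lt (ht.trans_lt hσρ')
  have hKO : K ⊆ O := fun z hz =>
    ⟨hUV (subset_closure ⟨hDball _ hz.1 _ hz.2.1, (hsub hz.2.2).1⟩), (hsub hz.2.2).2⟩
  have hF : ∀ l, ContDiffOn ℝ (⊤ : ℕ∞)
      (fun z : (Fin N → ℝ) × Euc N × Euc n => F l z.1 z.2.1 z.2.2) O := fun l =>
    ContDiffOn.sum fun α _ => by
      have hmon : ContDiff ℝ (⊤ : ℕ∞)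
          (fun z : (Fin N → ℝ) × Euc N × Euc n => monomial α z.2.1) := by
        unfold monomial
        fun_prop
      exact ((hc l α).comp hD.contDiffOn fun z hz => hz.1).mul hmon.contDiffOn
  have hmem : ∀ δ ∈ unitCube ν, ∀ t ∈ ball (0 : Euc N) σ,
      ∀ u ∈ closedBall (0 : Euc n) (2 * r),
      ((k δ, t, u) : (Fin N → ℝ) × Euc N × Euc n) ∈ K := fun δ hδ t ht u hu =>
    ⟨⟨fun i => (dpow_mem_Icc hδ (he i)).1, fun i => (dpow_mem_Icc hδ (he i)).2⟩,
      ball_subset_closedBall ht, hu⟩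
  refine ⟨σ, ξ, ball 0 r, hσ, hσρ, hξ, isOpen_ball, mem_ball_self hr, fun x hx => (hsub
    (ball_subset_closedBall (ball_subset_ball (by linarith) hx))).2,
    fun x hx => (hξB x hx).1, fun _ δ l => F l (k δ), ?_, ?_, ?_⟩
  · intro x hx δ hδ t ht u hu
    have hz := hmem δ hδ t ht u ((hξB x hx).2 δ hδ hu)
    refine (hW _ (hDball _ hz.1 _ hz.2.1) u (hsub hz.2.2).1).trans ?_
    refine Finset.sum_congr rfl fun l _ => ?_
    rw [smul_smul, Finset.sum_mul, Finset.sum_smul]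
    refine Finset.sum_congr rfl fun α _ => ?_
    by_cases hα : degMulti e α = d l
    · change (_ * monomial α (dilate e δ t)) • X l u = _
      rw [monomial_dilate (fun μ => (hδ μ).1) he, hα]
      congr 1
      ring
    · simp [hc0 l α hα]
  · intro x hx δ hδ l β' β
    exact (contDiffOn_derivTList_derivUList hO hOΩ hX (hF l) (fun l' => dpow δ (d l')) β' β
      ).continuousOn.comp
      (f := fun p : Euc N × Euc n => ((k δ, p) : (Fin N → ℝ) × Euc N × Euc n)) (by fun_prop)
      fun p hp => hKO (hmem δ hδ p.1 hp.1 p.2 ((hξB x hx).2 δ hδ hp.2))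
  · intro m
    choose C hC using fun l => exists_bound_derivTList_derivUList hO hOΩ hX (hF l) hK hKO m
    refine ⟨∑ l, |C l|, fun x hx δ hδ l β' β hm t ht u hu => ?_⟩
    refine (hC l (fun l' => dpow δ (d l')) (fun l' => dpow_mem_Icc hδ (hd l').1) β' β hm _
      (hmem δ hδ t ht u ((hξB x hx).2 δ hδ hu))).trans ?_
    exact (le_abs_self _).trans (Finset.single_le_sum (f := fun l => |C l|)
      (fun _ _ => abs_nonneg _) (Finset.mem_univ l))

end Control

end Zhang

open Zhang

/-- Lemma 6.1: strong control implies control, both for a pair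
`(X₀,d₀)` and for `W`. -/
theorem statement_5 {N ν n q : ℕ}
    (e : Fin N → Fin ν → ℝ) (he : AdmissibleE e)
    (Ω : Set (Euc n)) (hΩ : IsOpen Ω) (h0 : (0 : Euc n) ∈ Ω)
    (X₀ : VF n) (d₀ : Deg ν) (X : Fin q → VF n) (d : Fin q → Deg ν)
    (hX₀s : ContDiffOn ℝ (⊤ : ℕ∞) X₀ Ω) (hXs : ∀ l, ContDiffOn ℝ (⊤ : ℕ∞) (X l) Ω)
    (hd₀ : (∀ μ, 0 ≤ d₀ μ) ∧ d₀ ≠ 0) (hd : ∀ l, (∀ μ, 0 ≤ d l μ) ∧ d l ≠ 0)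
    (ρ : ℝ) (hρ : 0 < ρ) (W : Euc N → Euc n → Euc n)
    (hWs : ContDiffOn ℝ (⊤ : ℕ∞) (fun q : Euc N × Euc n => W q.1 q.2) (ball 0 ρ ×ˢ Ω))
    (hW0 : ∀ x ∈ Ω, W 0 x = 0) :
    (StrongControlsOn X d X₀ d₀ → ControlsPair X d Ω X₀ d₀) ∧
    (StrongControlsW X d e W → ControlsW X d e Ω ρ W) := by
  exact ⟨fun h => h.controlsPair hΩ h0 hXs hd, fun h => h.controlsW he.1 hρ hΩ h0 hXs hd⟩
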